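/- arXiv:2401.00378 — 2 statements merged into one kernel-verified Lean document; each statement's English description precedes it below -/
import Mathlib

section
/- If m¹ is a reversible measure for q, and for m¹-almost every x ∈ (−1,1) the measure q(x,·) is not mutually singular with m¹, then there exists a probability measure on E* which is ergodic for Q and absolutely continuous with respect to m². -/
open MeasureTheory ProbabilityTheory Set Pointwise
open scoped ENNReal

noncomputable section

/-- The increasing affine map from `(-1,1)` onto the chord `E_u`. -/
def ellMap (γ u x : ℝ) : ℝ := -u * Real.cos γ + x * Real.sqrt (1 - u ^ 2 * Real.sin γ ^ 2)

/-- The inverse of `ellMap γ u`. -/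
def ellInv (γ u y : ℝ) : ℝ := (y + u * Real.cos γ) / Real.sqrt (1 - u ^ 2 * Real.sin γ ^ 2)

/-- The open elliptical region `E`. -/
def Eset (γ : ℝ) : Set (ℝ × ℝ) :=
  {p | p.1 ^ 2 + 2 * Real.cos γ * p.1 * p.2 + p.2 ^ 2 < 1}

/-- The state space `E* = E × {−1,1}`, realized inside `ℝ × ℝ × ℝ`. -/
def EstarSet (γ : ℝ) : Set (ℝ × ℝ × ℝ) :=
  {w | (w.1, w.2.1) ∈ Eset γ ∧ (w.2.2 = 1 ∨ w.2.2 = -1)}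

/-- Uniform probability measure on `(-1,1)`. -/
def m1 : Measure ℝ := (2 : ℝ≥0∞)⁻¹ • volume.restrict (Ioo (-1 : ℝ) 1)

/-- The probability measure `m²` on `E*`: normalized Lebesgue measure on `E` times
uniform measure on `{−1,1}`. -/
def m2 (γ : ℝ) : Measure (ℝ × ℝ × ℝ) :=
  ((((volume (Eset γ))⁻¹ • volume.restrict (Eset γ)).prod
      ((2 : ℝ≥0∞)⁻¹ • (Measure.dirac (1 : ℝ) + Measure.dirac (-1 : ℝ)))).map
    fun p => (p.1.1, p.1.2, p.2))

/-- `q` is a Markov kernel on `(-1,1)`. -/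
def IsMarkovOnInterval (q : Kernel ℝ ℝ) : Prop :=
  IsMarkovKernel q ∧ ∀ x ∈ Ioo (-1 : ℝ) 1, q x (Ioo (-1 : ℝ) 1) = 1

/-- The kernel `Q` of the alternating random walk, as a measure-valued function on the
state space. -/
def Qfun (γ : ℝ) (q : Kernel ℝ ℝ) : ℝ × ℝ × ℝ → Measure (ℝ × ℝ × ℝ) := fun w =>
  if w.2.2 = -1 then
    Measure.map (fun x => (ellMap γ w.2.1 x, w.2.1, (1 : ℝ))) (q (-ellInv γ w.2.1 w.1))
  else
    Measure.map (fun x => (w.1, ellMap γ w.1 x, (-1 : ℝ))) (q (-ellInv γ w.1 w.2.1))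

/-- The kernel `Q†`. -/
def Qdag (γ : ℝ) (q : Kernel ℝ ℝ) : ℝ × ℝ × ℝ → Measure (ℝ × ℝ × ℝ) := fun w =>
  if w.2.2 = 1 then
    Measure.map (fun x => (ellMap γ w.2.1 x, w.2.1, (-1 : ℝ)))
      ((q (ellInv γ w.2.1 w.1)).map (fun y => -y))
  else
    Measure.map (fun x => (w.1, ellMap γ w.1 x, (1 : ℝ)))
      ((q (ellInv γ w.1 w.2.1)).map (fun y => -y))

/-- Bounded continuous real-valued functions on a subset `S`. -/
def BddCtsOn {X : Type*} [TopologicalSpace X] (S : Set X) (f : X → ℝ) : Prop :=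
  ContinuousOn f S ∧ ∃ C, ∀ x ∈ S, |f x| ≤ C

/-- `m¹` is a reversible measure for `q`. -/
def Reversible1 (q : Kernel ℝ ℝ) : Prop :=
  ∀ j k : ℝ → ℝ, BddCtsOn (Ioo (-1 : ℝ) 1) j → BddCtsOn (Ioo (-1 : ℝ) 1) k →
    ∫ x, k x * ∫ y, j y ∂(q x) ∂m1 = ∫ x, j x * ∫ y, k y ∂(q x) ∂m1

/-- The `†`-operation on measure-valued functions on `(-1,1)`: `p†(x,A) := p(−x,−A)`. -/
def dag (p : ℝ → Measure ℝ) : ℝ → Measure ℝ := fun x => (p (-x)).map (fun y => -y)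

/-- `m¹` is a `†`-reversible measure for `p`. -/
def DagReversible1 (p : ℝ → Measure ℝ) : Prop :=
  ∀ j k : ℝ → ℝ, BddCtsOn (Ioo (-1 : ℝ) 1) j → BddCtsOn (Ioo (-1 : ℝ) 1) k →
    ∫ x, k x * ∫ y, j y ∂(p x) ∂m1 = ∫ x, j x * ∫ y, k y ∂(dag p x) ∂m1

/-- `m²` is a `†`-reversible measure for `Q`. -/
def DagReversible2 (γ : ℝ) (q : Kernel ℝ ℝ) : Prop :=
  ∀ f g : ℝ × ℝ × ℝ → ℝ, BddCtsOn (EstarSet γ) f → BddCtsOn (EstarSet γ) g →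
    ∫ w, g w * ∫ w', f w' ∂(Qfun γ q w) ∂(m2 γ) =
      ∫ w, f w * ∫ w', g w' ∂(Qdag γ q w) ∂(m2 γ)

/-- `μ` is an invariant measure for the transition function `p`. -/
def KInvariantMeasure {S : Type*} [MeasurableSpace S] (μ : Measure S) (p : S → Measure S) :
    Prop :=
  ∀ A : Set S, MeasurableSet A → ∫⁻ x, p x A ∂μ = μ A

/-- The set `A` is `(μ,p)`-invariant. -/
def KInvariantSet {S : Type*} [MeasurableSpace S] (μ : Measure S) (p : S → Measure S)
    (A : Set S) : Prop :=
  ∀ᵐ x ∂μ, x ∈ A → p x A = 1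

/-- `μ` is an ergodic measure for the transition function `p`. -/
def KErgodicMeasure {S : Type*} [MeasurableSpace S] (μ : Measure S) (p : S → Measure S) :
    Prop :=
  KInvariantMeasure μ p ∧
    ∀ A : Set S, MeasurableSet A → KInvariantSet μ p A → μ A = 0 ∨ μ A = 1

/-- The set `A` is `(μ,p)`-ergodic. -/
def KErgodicSet {S : Type*} [MeasurableSpace S] (μ : Measure S) (p : S → Measure S)
    (A : Set S) : Prop :=
  MeasurableSet A ∧ KInvariantSet μ p A ∧
    ∀ B : Set S, B ⊆ A → MeasurableSet B → KInvariantSet μ p B → μ B = 0 ∨ μ B = μ A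

/-- `F⁺`: the slice of `F ⊆ E*` at `s = 1`. -/
def Fplus (F : Set (ℝ × ℝ × ℝ)) : Set (ℝ × ℝ) := {p | (p.1, p.2, (1 : ℝ)) ∈ F}

/-- `F⁻`: the slice of `F ⊆ E*` at `s = −1`. -/
def Fminus (F : Set (ℝ × ℝ × ℝ)) : Set (ℝ × ℝ) := {p | (p.1, p.2, (-1 : ℝ)) ∈ F}

/-- `[G]^u ⊆ (−1,1)`. -/
def brU (γ : ℝ) (G : Set (ℝ × ℝ)) (u : ℝ) : Set ℝ :=
  {x | x ∈ Ioo (-1 : ℝ) 1 ∧ (u, ellMap γ u x) ∈ G}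

/-- `[G]_v ⊆ (−1,1)`. -/
def brV (γ : ℝ) (G : Set (ℝ × ℝ)) (v : ℝ) : Set ℝ :=
  {x | x ∈ Ioo (-1 : ℝ) 1 ∧ (ellMap γ v x, v) ∈ G}

/-- The map `T₀` on `E*`. -/
def T0 (γ : ℝ) (w : ℝ × ℝ × ℝ) : ℝ × ℝ × ℝ :=
  (-w.1 - 2 * w.2.1 * Real.cos γ, w.2.1, -w.2.2)

/-- The map `T₁` on `E*`. -/
def T1 (γ : ℝ) (w : ℝ × ℝ × ℝ) : ℝ × ℝ × ℝ :=
  (w.1, -w.2.1 - 2 * w.1 * Real.cos γ, -w.2.2)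

/-- The linear map `U_γ` taking `E` to the unit disk. -/
def Ugamma (γ : ℝ) (p : ℝ × ℝ) : ℝ × ℝ := (p.1 + p.2 * Real.cos γ, p.2 * Real.sin γ)

/-- `V(u,v,s) = s·|U_γ(u,v)|²`. -/
def Vfun (γ : ℝ) (w : ℝ × ℝ × ℝ) : ℝ :=
  w.2.2 * ((w.1 + w.2.1 * Real.cos γ) ^ 2 + (w.2.1 * Real.sin γ) ^ 2)

theorem compl_inv {S : Type*} [MeasurableSpace S] (m : Measure S) [IsFiniteMeasure m]
    (p : S → Measure S) (hpm : ∀ A, MeasurableSet A → Measurable fun x => p x A)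
    (hinv : KInvariantMeasure m p) (F : Set S) (hF : MeasurableSet F)
    (hFi : KInvariantSet m p F) : ∀ᵐ x ∂m, x ∉ F → p x F = 0 := by
  have h1 := hinv F hF
  rw [← lintegral_add_compl _ hF] at h1
  have h2 : ∫⁻ x in F, p x F ∂m = m F := by
    have : ∫⁻ x in F, p x F ∂m = ∫⁻ x in F, 1 ∂m :=
      setLIntegral_congr_fun_ae hF hFi
    rw [this]; simp
  rw [h2] at h1
  have h3 : ∫⁻ x in Fᶜ, p x F ∂m = 0 := by
    have : m F + ∫⁻ x in Fᶜ, p x F ∂m = m F + 0 := by rw [h1, add_zero]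
    exact (ENNReal.add_right_inj (measure_ne_top m F)).1 this
  rw [lintegral_eq_zero_iff (hpm F hF)] at h3
  exact (ae_restrict_iff' hF.compl).1 h3

theorem erg_abs {S : Type*} [MeasurableSpace S] (m : Measure S) [IsFiniteMeasure m]
    (p : S → Measure S) (hp : ∀ x, IsProbabilityMeasure (p x))
    (hpm : ∀ A, MeasurableSet A → Measurable fun x => p x A)
    (hinv : KInvariantMeasure m p) (D : Set S) (hD0 : m D ≠ 0)
    (hD : ∀ F, MeasurableSet F → KInvariantSet m p F →
      (∀ᵐ x ∂m, x ∈ D → x ∈ F) ∨ (∀ᵐ x ∂m, x ∈ D → x ∉ F)) :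
    ∃ μ : Measure S, IsProbabilityMeasure μ ∧ KErgodicMeasure μ p ∧ μ ≪ m := by
  classical
  let I : Set (Set S) := {F | MeasurableSet F ∧ KInvariantSet m p F ∧ ∀ᵐ x ∂m, x ∈ D → x ∈ F}
  have hI : (m '' I).Nonempty := by
    refine ⟨_, univ, ⟨MeasurableSet.univ, ?_, ?_⟩, rfl⟩
    · exact ae_of_all _ fun x _ => measure_univ
    · exact ae_of_all _ fun x _ => mem_univ _
  obtain ⟨a, -, ha, haI⟩ := exists_seq_tendsto_sInf hI (OrderBot.bddBelow _)
  choose F hFI hFa using haI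
  let G := ⋂ n, F n
  have hG : G ∈ I := by
    refine ⟨MeasurableSet.iInter fun n => (hFI n).1, ?_, ?_⟩
    · have := ae_all_iff.2 fun n => (hFI n).2.1
      filter_upwards [this] with x hx hxG
      have h2 : ∀ n, ∀ᵐ y ∂(p x), y ∈ F n := fun n => by
        have := hx n (mem_iInter.1 hxG n)
        exact (mem_ae_iff_prob_eq_one (hFI n).1).2 this
      have h3 : ∀ᵐ y ∂(p x), y ∈ G := by
        filter_upwards [ae_all_iff.2 h2] with y hy using mem_iInter.2 hy
      exact (mem_ae_iff_prob_eq_one (MeasurableSet.iInter fun n => (hFI n).1)).1 h3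
    · filter_upwards [ae_all_iff.2 fun n => (hFI n).2.2] with x hx hxD
      exact mem_iInter.2 fun n => hx n hxD
  have hGmin : ∀ H ∈ I, m G ≤ m H := by
    intro H hH
    have h1 : m G ≤ sInf (m '' I) := by
      refine ge_of_tendsto' ha fun n => ?_
      rw [← hFa n]; exact measure_mono (iInter_subset _ n)
    exact h1.trans (sInf_le ⟨H, hH, rfl⟩)
  obtain ⟨hGm, hGi, hGD⟩ := hG
  have hG0 : m G ≠ 0 := fun h => hD0 (by
    have : m D ≤ m G := measure_mono_ae hGD
    simpa [h] using this)
  have hGt : m G ≠ ∞ := measure_ne_top _ _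
  have hGc := compl_inv m p hpm hinv G hGm hGi
  refine ⟨(m G)⁻¹ • m.restrict G, ⟨?_⟩, ⟨?_, ?_⟩, ?_⟩
  · simp [ENNReal.inv_mul_cancel hG0 hGt]
  · intro A hA
    have key : ∫⁻ x in G, p x A ∂m = m (A ∩ G) := by
      rw [← hinv (A ∩ G) (hA.inter hGm), ← lintegral_add_compl (fun x => p x (A ∩ G)) hGm]
      have e1 : ∫⁻ x in Gᶜ, p x (A ∩ G) ∂m = 0 := by
        rw [lintegral_eq_zero_iff (hpm _ (hA.inter hGm))]
        refine (ae_restrict_iff' hGm.compl).2 ?_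
        filter_upwards [hGc] with x hx hxG
        exact measure_mono_null inter_subset_right (hx hxG)
      rw [e1, add_zero]
      refine setLIntegral_congr_fun_ae hGm ?_
      filter_upwards [hGi] with x hx hxG
      refine measure_congr ?_
      have := (mem_ae_iff_prob_eq_one hGm).2 (hx hxG)
      filter_upwards [this] with y hy
      exact propext ⟨fun h => ⟨h, hy⟩, fun h => h.1⟩
    rw [lintegral_smul_measure, key]
    simp [Measure.restrict_apply hA]
  · intro A hA hAi
    have hAi' : ∀ᵐ x ∂m, x ∈ G → x ∈ A → p x A = 1 := by
      have h1 : ∀ᵐ x ∂(m.restrict G), x ∈ A → p x A = 1 := by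
        have hac : m.restrict G ≪ (m G)⁻¹ • m.restrict G :=
          Measure.absolutelyContinuous_smul (by simp [hGt])
        exact hac.ae_le hAi
      exact (ae_restrict_iff' hGm).1 h1
    have hGA : KInvariantSet m p (G ∩ A) := by
      filter_upwards [hAi', hGi] with x h1 h2 hx
      have a1 := (mem_ae_iff_prob_eq_one hA).2 (h1 hx.1 hx.2)
      have a2 := (mem_ae_iff_prob_eq_one hGm).2 (h2 hx.1)
      exact (mem_ae_iff_prob_eq_one (hGm.inter hA)).1 (Filter.inter_mem a2 a1)
    have hGAm := hGm.inter hA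
    have hval : ((m G)⁻¹ • m.restrict G) A = (m G)⁻¹ * m (G ∩ A) := by
      simp [Measure.restrict_apply hA, inter_comm]
    rw [hval]
    rcases hD _ hGAm hGA with h | h
    · right
      have : m (G ∩ A) = m G := le_antisymm (measure_mono inter_subset_left)
        (hGmin _ ⟨hGAm, hGA, h⟩)
      rw [this, ENNReal.inv_mul_cancel hG0 hGt]
    · left
      have hc := compl_inv m p hpm hinv _ hGAm hGA
      have hB : G \ A ∈ I := by
        refine ⟨hGm.diff hA, ?_, ?_⟩
        · filter_upwards [hc, hGi] with x h1 h2 hx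
          have a1 : ∀ᵐ y ∂(p x), y ∉ G ∩ A := by
            rw [ae_iff]; simpa using h1 (fun h => hx.2 h.2)
          have a2 := (mem_ae_iff_prob_eq_one hGm).2 (h2 hx.1)
          refine (mem_ae_iff_prob_eq_one (hGm.diff hA)).1 ?_
          filter_upwards [a1, a2] with y b1 b2 using ⟨b2, fun h => b1 ⟨b2, h⟩⟩
        · filter_upwards [h, hGD] with x h1 h2 hx
          exact ⟨h2 hx, fun hA => h1 hx ⟨h2 hx, hA⟩⟩
      have h1 : m G ≤ m (G \ A) := hGmin _ hB
      have h2 := measure_inter_add_sdiff (μ := m) G hA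
      have : m (G ∩ A) = 0 := by
        have h3 : m (G ∩ A) + m G ≤ 0 + m G := by
          rw [zero_add]
          exact le_trans (by gcongr) h2.le
        exact le_antisymm ((ENNReal.add_le_add_iff_right hGt).1 h3) zero_le
      simp [this]
  · exact (Measure.smul_absolutelyContinuous).trans Measure.restrict_le_self.absolutelyContinuous


theorem connect (R : Set (ℝ × ℝ)) (hR : MeasurableSet R) (hR0 : volume R ≠ 0) :
    ∃ X Y : Set ℝ, MeasurableSet X ∧ MeasurableSet Y ∧ volume (R ∩ X ×ˢ Y) ≠ 0 ∧
      ∀ A B : Set ℝ, (∀ᵐ p : ℝ × ℝ, p ∈ R → (p.1 ∈ A ↔ p.2 ∈ B)) →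
        ((∀ᵐ x : ℝ, x ∈ X → x ∈ A) ∧ (∀ᵐ y : ℝ, y ∈ Y → y ∈ B)) ∨
        ((∀ᵐ x : ℝ, x ∈ X → x ∉ A) ∧ (∀ᵐ y : ℝ, y ∈ Y → y ∉ B)) := by
  classical
  -- density point
  obtain ⟨x0, y0, r, hr, hdens⟩ : ∃ x0 y0 r : ℝ, 0 < r ∧
      ENNReal.ofReal (2 * r ^ 2) < volume (R ∩ (Metric.closedBall x0 r ×ˢ Metric.closedBall y0 r)) := by
    have h := IsUnifLocDoublingMeasure.ae_tendsto_measure_inter_div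
      (volume : Measure (ℝ × ℝ)) R 1
    have hne : (volume.restrict R : Measure (ℝ × ℝ)) ≠ 0 := by
      rwa [Ne, Measure.restrict_eq_zero]
    have : (ae (volume.restrict R : Measure (ℝ × ℝ))).NeBot := ae_neBot.2 hne
    obtain ⟨p, hp⟩ := h.exists
    have h1 := hp (ι := ℝ) (l := nhdsWithin 0 (Ioi 0)) (fun _ => p) (fun r => r) Filter.tendsto_id
      (by
        filter_upwards [self_mem_nhdsWithin] with r hr
        exact Metric.mem_closedBall_self (by simpa using (le_of_lt hr)))
    have h2 := h1.eventually (lt_mem_nhds (show (1/2 : ℝ≥0∞) < 1 by norm_num))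
    obtain ⟨r, hr1, hr0⟩ := (h2.and self_mem_nhdsWithin).exists
    refine ⟨p.1, p.2, r, hr0, ?_⟩
    have hr0' : 0 < r := hr0
    have hb : Metric.closedBall p r = Metric.closedBall p.1 r ×ˢ Metric.closedBall p.2 r :=
      (closedBall_prod_same _ _ _).symm
    have hv : volume (Metric.closedBall p r) = ENNReal.ofReal (4 * r ^ 2) := by
      rw [hb, Measure.volume_eq_prod, Measure.prod_prod, Real.volume_closedBall,
        Real.volume_closedBall, ← ENNReal.ofReal_mul (by positivity)]
      congr 1; ring
    rw [← hb]
    rw [ENNReal.lt_div_iff_mul_lt (Or.inl (by rw [hv]; simp; positivity)) (Or.inl (by rw [hv]; exact ENNReal.ofReal_ne_top)), hv] at hr1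
    refine lt_of_eq_of_lt ?_ hr1
    have e4 : ENNReal.ofReal (4 * r ^ 2) = 2 * ENNReal.ofReal (2 * r ^ 2) := by
      rw [show (4 * r ^ 2 : ℝ) = 2 * (2 * r ^ 2) by ring,
        ENNReal.ofReal_mul (by norm_num : (0:ℝ) ≤ 2), ENNReal.ofReal_ofNat]
    rw [e4, ← mul_assoc]
    rw [one_div, ENNReal.inv_mul_cancel (by norm_num) (by norm_num), one_mul]
  set J := Metric.closedBall y0 r with hJ
  set K := Metric.closedBall x0 r with hK
  have hJm : MeasurableSet J := measurableSet_closedBall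
  have hKm : MeasurableSet K := measurableSet_closedBall
  have hJv : volume J = ENNReal.ofReal (2 * r) := by rw [hJ, Real.volume_closedBall]
  have hKv : volume K = ENNReal.ofReal (2 * r) := by rw [hK, Real.volume_closedBall]
  let S : Set (ℝ × ℝ) := R ∩ (K ×ˢ J)
  have hS : MeasurableSet S := hR.inter (hKm.prod hJm)
  let sl : ℝ → Set ℝ := fun x => Prod.mk x ⁻¹' S
  have hslm : ∀ x, MeasurableSet (sl x) := fun x => measurable_prodMk_left hS
  let X : Set ℝ := {x | ENNReal.ofReal r < volume (sl x)}
  have hX : MeasurableSet X := measurableSet_lt measurable_const (measurable_measure_prodMk_left hS)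
  have hslJ : ∀ x, sl x ⊆ J := fun x y hy => hy.2.2
  have hX0 : volume X ≠ 0 := by
    intro h0
    have h1 : volume S = ∫⁻ x, volume (sl x) := by
      rw [Measure.volume_eq_prod, Measure.prod_apply hS]
    have h2 : ∫⁻ x, volume (sl x) ≤ ∫⁻ x, K.indicator (fun _ => ENNReal.ofReal r) x := by
      refine lintegral_mono_ae ?_
      have : ∀ᵐ x : ℝ, x ∉ X := measure_eq_zero_iff_ae_notMem.1 h0
      filter_upwards [this] with x hx
      by_cases hxK : x ∈ K
      · rw [indicator_of_mem hxK]; exact not_lt.1 hx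
      · have : sl x = ∅ := by
          ext y; simp only [mem_empty_iff_false, iff_false]
          intro hy; exact hxK hy.2.1
        simp [this]
    rw [lintegral_indicator hKm, setLIntegral_const, hKv, ← ENNReal.ofReal_mul hr.le] at h2
    have : volume S ≤ ENNReal.ofReal (2 * r ^ 2) := by
      rw [h1]; refine h2.trans (le_of_eq ?_); congr 1; ring
    exact absurd hdens (not_lt.2 this)
  let T : Set (ℝ × ℝ) := R ∩ (X ×ˢ univ)
  have hT : MeasurableSet T := hR.inter (hX.prod MeasurableSet.univ)
  let Y : Set ℝ := {y | 0 < volume ((fun x => (x, y)) ⁻¹' T)}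
  have hY : MeasurableSet Y := measurableSet_lt measurable_const (measurable_measure_prodMk_right hT)
  have hT0 : volume T ≠ 0 := by
    intro h0
    rw [Measure.volume_eq_prod, Measure.measure_prod_null hT] at h0
    apply hX0
    refine measure_eq_zero_iff_ae_notMem.2 ?_
    filter_upwards [h0] with x hx hxX
    have : sl x ⊆ Prod.mk x ⁻¹' T := fun y hy => ⟨hy.1, hxX, mem_univ _⟩
    have h1 := measure_mono_null this hx
    have h2 : ENNReal.ofReal r < volume (sl x) := hxX
    rw [h1] at h2
    exact absurd h2 (by simp)
  refine ⟨X, Y, hX, hY, ?_, ?_⟩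
  · intro h0
    apply hT0
    have hsub : T ⊆ (R ∩ X ×ˢ Y) ∪ (T ∩ (univ ×ˢ Yᶜ)) := by
      intro p hp
      by_cases hpy : p.2 ∈ Y
      · exact Or.inl ⟨hp.1, hp.2.1, hpy⟩
      · exact Or.inr ⟨hp, mem_univ _, hpy⟩
    refine measure_mono_null hsub (measure_union_null h0 ?_)
    have hm : MeasurableSet (T ∩ (univ ×ˢ Yᶜ)) := hT.inter (MeasurableSet.univ.prod hY.compl)
    rw [Measure.volume_eq_prod, Measure.prod_apply_symm hm]
    rw [lintegral_eq_zero_iff (measurable_measure_prodMk_right hm)]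
    refine ae_of_all _ fun y => ?_
    by_cases hy : y ∈ Y
    · have : (fun x => (x, y)) ⁻¹' (T ∩ (univ ×ˢ Yᶜ)) = ∅ := by
        ext x; simp [hy]
      simp only [this, measure_empty, Pi.zero_apply]
    · refine measure_mono_null (t := (fun x => (x, y)) ⁻¹' T) (fun x hx => hx.1) ?_
      exact le_antisymm (not_lt.1 hy) zero_le
  · intro A B hAB
    have hAB1 : ∀ᵐ x : ℝ, ∀ᵐ y : ℝ, (x, y) ∈ R → (x ∈ A ↔ y ∈ B) := by
      rw [Measure.volume_eq_prod] at hAB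
      exact Measure.ae_ae_of_ae_prod hAB
    have hAB2 : ∀ᵐ y : ℝ, ∀ᵐ x : ℝ, (x, y) ∈ R → (x ∈ A ↔ y ∈ B) := by
      have h := (Measure.measurePreserving_swap (μ := (volume : Measure ℝ))
        (ν := (volume : Measure ℝ))).quasiMeasurePreserving.ae (p := fun p => p ∈ R → (p.1 ∈ A ↔ p.2 ∈ B)) hAB
      exact Measure.ae_ae_of_ae_prod h
    have key : ∀ x x', x ∈ X → x' ∈ X → (∀ᵐ y : ℝ, (x, y) ∈ R → (x ∈ A ↔ y ∈ B)) →
        (∀ᵐ y : ℝ, (x', y) ∈ R → (x' ∈ A ↔ y ∈ B)) → (x ∈ A ↔ x' ∈ A) := by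
      intro x x' hx hx' h1 h2
      have hpos : volume (sl x ∩ sl x') ≠ 0 := by
        intro h0
        have h3 := measure_union_add_inter (μ := volume) (sl x) (hslm x')
        rw [h0, add_zero] at h3
        have h4 : volume (sl x ∪ sl x') ≤ ENNReal.ofReal (2 * r) := by
          rw [← hJv]; exact measure_mono (union_subset (hslJ x) (hslJ x'))
        have h5 : ENNReal.ofReal r + ENNReal.ofReal r < volume (sl x) + volume (sl x') :=
          ENNReal.add_lt_add hx hx'
        rw [← ENNReal.ofReal_add hr.le hr.le, ← two_mul, ← h3] at h5
        exact absurd h5 (not_lt.2 h4)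
      by_contra hne
      apply hpos
      refine measure_eq_zero_iff_ae_notMem.2 ?_
      filter_upwards [h1, h2] with y a1 a2 hy
      exact hne ((a1 hy.1.1).trans (a2 hy.2.1).symm)
    have hYs : ∀ P : Prop, (∀ᵐ x : ℝ, x ∈ X → (x ∈ A ↔ P)) → (∀ᵐ y : ℝ, y ∈ Y → (y ∈ B ↔ P)) := by
      intro P hP
      filter_upwards [hAB2] with y hy hyY
      by_contra hne
      have : volume ((fun x => (x, y)) ⁻¹' T) = 0 := by
        refine measure_eq_zero_iff_ae_notMem.2 ?_
        filter_upwards [hy, hP] with x a1 a2 hx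
        exact hne ((a1 hx.1).symm.trans (a2 hx.2.1))
      exact absurd hyY (by simp [Y, this])
    by_cases hex : ∃ x ∈ X, (∀ᵐ y : ℝ, (x, y) ∈ R → (x ∈ A ↔ y ∈ B)) ∧ x ∈ A
    · left
      obtain ⟨x', hx', h', hA'⟩ := hex
      have h1 : ∀ᵐ x : ℝ, x ∈ X → (x ∈ A ↔ True) := by
        filter_upwards [hAB1] with x hx hxX
        exact iff_true_intro ((key x x' hxX hx' hx h').2 hA')
      have h2 := hYs True h1
      simpa using And.intro h1 h2
    · right
      have h1 : ∀ᵐ x : ℝ, x ∈ X → (x ∈ A ↔ False) := by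
        filter_upwards [hAB1] with x hx hxX
        exact iff_false_intro fun hA => hex ⟨x, hxX, hx, hA⟩
      have h2 := hYs False h1
      simpa using And.intro h1 h2

theorem exists_R (q : Kernel ℝ ℝ) [IsMarkovKernel q]
    (hns : ∀ᵐ x ∂m1, ¬ (q x).MutuallySingular m1) :
    ∃ R : Set (ℝ × ℝ), MeasurableSet R ∧ volume R ≠ 0 ∧ R ⊆ Ioo (-1) 1 ×ˢ Ioo (-1) 1 ∧
      ∀ A B : Set ℝ, MeasurableSet A → MeasurableSet B →
        (∀ᵐ x : ℝ, x ∈ Ioo (-1 : ℝ) 1 → (x ∈ A → q x B = 1) ∧ (x ∉ A → q x B = 0)) →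
        (∀ᵐ p : ℝ × ℝ, p ∈ R → (p.1 ∈ A ↔ p.2 ∈ B)) := by
  have : IsFiniteMeasure m1 := by
    unfold m1
    exact Measure.smul_finite _ (by norm_num)
  have hm1 : ∀ P : ℝ → Prop, (∀ᵐ x ∂m1, P x) ↔ ∀ᵐ x : ℝ, x ∈ Ioo (-1 : ℝ) 1 → P x := by
    intro P
    unfold m1
    rw [Measure.ae_ennreal_smul_measure_iff (by norm_num), ae_restrict_iff' measurableSet_Ioo]
  let η : Kernel ℝ ℝ := Kernel.const ℝ m1
  let ρ := Kernel.rnDeriv q η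
  have hρ : Measurable (fun p : ℝ × ℝ => ρ p.1 p.2) := Kernel.measurable_rnDeriv q η
  have hρe : ∀ x, ρ x =ᵐ[m1] (q x).rnDeriv m1 := fun x =>
    Kernel.rnDeriv_eq_rnDeriv_measure (κ := q) (η := η) (a := x)
  let R : Set (ℝ × ℝ) := {p | ρ p.1 p.2 ≠ 0} ∩ (Ioo (-1) 1 ×ˢ Ioo (-1) 1)
  have hR : MeasurableSet R :=
    (measurableSet_eq_fun hρ measurable_const).compl.inter (measurableSet_Ioo.prod measurableSet_Ioo)
  have hzero : ∀ x B, MeasurableSet B → q x B = 0 → ∀ᵐ y ∂m1, ρ x y ≠ 0 → y ∉ B := by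
    intro x B hB h0
    have h1 : (m1.withDensity ((q x).rnDeriv m1)) B = 0 :=
      le_antisymm (((q x).withDensity_rnDeriv_le m1 B).trans h0.le) zero_le
    rw [withDensity_apply _ hB, lintegral_eq_zero_iff (Measure.measurable_rnDeriv _ _)] at h1
    have h2 := (ae_restrict_iff' hB).1 h1
    filter_upwards [h2, hρe x] with y a1 a2 a3 a4
    exact a3 (a2.trans (a1 a4))
  refine ⟨R, hR, ?_, inter_subset_right, ?_⟩
  · intro h0
    rw [Measure.volume_eq_prod, Measure.measure_prod_null hR] at h0
    have h1 : ∀ᵐ x ∂m1, False := by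
      filter_upwards [hns, (hm1 fun x => x ∈ Ioo (-1 : ℝ) 1 ∧ volume (Prod.mk x ⁻¹' R) = 0).2 (by
        filter_upwards [h0] with x hx hI using ⟨hI, hx⟩)] with x hx1 hx2
      apply hx1
      rw [← Measure.rnDeriv_eq_zero]
      have h3 : ∀ᵐ y ∂m1, ρ x y = 0 := by
        rw [hm1]
        filter_upwards [measure_eq_zero_iff_ae_notMem.1 hx2.2] with y hy hyI
        by_contra hne
        exact hy ⟨hne, hx2.1, hyI⟩
      filter_upwards [h3, hρe x] with y a1 a2
      rw [← a2, a1]; rfl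
    rw [hm1] at h1
    have h2 : volume (Ioo (-1 : ℝ) 1) = 0 := measure_eq_zero_iff_ae_notMem.2 h1
    rw [Real.volume_Ioo] at h2
    norm_num at h2
  · intro A B hA hB h
    rw [Measure.volume_eq_prod, Measure.ae_prod_iff_ae_ae]
    · filter_upwards [h] with x hx
      by_cases hxI : x ∈ Ioo (-1 : ℝ) 1
      · by_cases hxA : x ∈ A
        · have h1 := (hx hxI).1 hxA
          have h2 : q x Bᶜ = 0 := (prob_compl_eq_zero_iff hB).2 h1
          filter_upwards [(hm1 _).1 (hzero x _ hB.compl h2)] with y hy hR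
          have := hy hR.2.2 hR.1
          simp only [hxA, true_iff]
          exact not_not.1 this
        · have h1 := (hx hxI).2 hxA
          filter_upwards [(hm1 _).1 (hzero x _ hB h1)] with y hy hR
          have := hy hR.2.2 hR.1
          simp only [hxA, false_iff]
          exact this
      · exact ae_of_all _ fun y hy => absurd hy.2.1 hxI
    · have e : {p : ℝ × ℝ | p ∈ R → (p.1 ∈ A ↔ p.2 ∈ B)} =
        Rᶜ ∪ (((Prod.fst ⁻¹' A) ∩ (Prod.snd ⁻¹' B)) ∪ ((Prod.fst ⁻¹' A)ᶜ ∩ (Prod.snd ⁻¹' B)ᶜ)) := by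
        ext p; simp; tauto
      rw [e]
      exact hR.compl.union (((measurable_fst hA).inter (measurable_snd hB)).union
        ((measurable_fst hA).compl.inter (measurable_snd hB).compl))


theorem vol_inv (q : Kernel ℝ ℝ) [IsMarkovKernel q] (hrev : Reversible1 q) (B : Set ℝ)
    (hB : MeasurableSet B) :
    ∫⁻ x in Ioo (-1 : ℝ) 1, q x B = volume (B ∩ Ioo (-1) 1) := by
  have : IsFiniteMeasure m1 := by
    unfold m1
    exact Measure.smul_finite _ (by norm_num)
  have h : m1.bind q = m1 := by
    apply ext_of_forall_integral_eq_of_IsFiniteMeasure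
    intro f
    have h1 := hrev f (fun _ => 1)
      ⟨f.continuous.continuousOn, ‖f‖, fun x _ => by simpa using f.norm_coe_le_norm x⟩
      ⟨continuousOn_const, 1, by simp⟩
    rw [← Measure.snd_compProd, Measure.snd, integral_map (by fun_prop) (by fun_prop), Measure.integral_compProd (by exact (f.integrable (Measure.snd (m1 ⊗ₘ q))).comp_measurable measurable_snd)]
    simpa using h1
  have h2 : ∫⁻ x, q x B ∂m1 = m1 B := by
    conv_rhs => rw [← h]
    rw [Measure.bind_apply hB q.aemeasurable]
  unfold m1 at h2
  rw [lintegral_smul_measure, Measure.smul_apply, Measure.restrict_apply hB] at h2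
  simp only [smul_eq_mul] at h2
  exact (ENNReal.mul_right_inj (by norm_num) (by norm_num)).1 h2

theorem map_affine (a b : ℝ) (ha : a ≠ 0) :
    Measure.map (fun x : ℝ => b + x * a) volume = ENNReal.ofReal |a⁻¹| • volume := by
  have h : (fun x : ℝ => b + x * a) = (fun y => b + y) ∘ (fun x => x * a) := rfl
  rw [h, ← Measure.map_map (by fun_prop) (by fun_prop), Real.map_volume_mul_right ha,
    Measure.map_smul, map_add_left_eq_self]

theorem emb_affine (a b : ℝ) (ha : a ≠ 0) : MeasurableEmbedding (fun x : ℝ => b + x * a) := by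
  exact ((Homeomorph.mulRight₀ a ha).trans (Homeomorph.addLeft b)).measurableEmbedding

theorem ae_affine (a b : ℝ) (ha : a ≠ 0) (P : ℝ → Prop) :
    (∀ᵐ v : ℝ, P v) ↔ ∀ᵐ x : ℝ, P (b + x * a) := by
  rw [← (emb_affine a b ha).ae_map_iff, map_affine a b ha,
    Measure.ae_ennreal_smul_measure_iff (by simpa using ha)]

theorem lint_affine (a b : ℝ) (ha : a ≠ 0) (g : ℝ → ℝ≥0∞) :
    ∫⁻ v, g v = ENNReal.ofReal |a| * ∫⁻ x, g (b + x * a) := by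
  rw [← (emb_affine a b ha).lintegral_map, map_affine a b ha, lintegral_smul_measure, smul_eq_mul,
    ← mul_assoc, ← ENNReal.ofReal_mul (abs_nonneg _), ← abs_mul, mul_inv_cancel₀ ha]
  simp

theorem mem_E_iff (γ u v : ℝ) : (u, v) ∈ Eset γ ↔
    (v + u * Real.cos γ) ^ 2 < 1 - u ^ 2 * Real.sin γ ^ 2 := by
  simp only [Eset, mem_ofPred_eq]
  have := Real.sin_sq_add_cos_sq γ
  have e : Real.sin γ ^ 2 = 1 - Real.cos γ ^ 2 := by linarith
  rw [e]
  constructor <;> intro h <;> nlinarith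

theorem mem_E_swap (γ u v : ℝ) : (u, v) ∈ Eset γ ↔ (v, u) ∈ Eset γ := by
  simp only [Eset, mem_ofPred_eq]
  constructor <;> intro h <;> linarith

theorem E_pos {γ u v : ℝ} (h : (u, v) ∈ Eset γ) : 0 < 1 - u ^ 2 * Real.sin γ ^ 2 :=
  lt_of_le_of_lt (sq_nonneg _) ((mem_E_iff _ _ _).1 h)

theorem ellMap_inv {γ u : ℝ} (h : 0 < 1 - u ^ 2 * Real.sin γ ^ 2) (v : ℝ) :
    ellMap γ u (ellInv γ u v) = v := by
  have := Real.sqrt_pos.2 h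
  unfold ellMap ellInv
  field_simp
  ring

theorem ellInv_map {γ u : ℝ} (h : 0 < 1 - u ^ 2 * Real.sin γ ^ 2) (x : ℝ) :
    ellInv γ u (ellMap γ u x) = x := by
  have := Real.sqrt_pos.2 h
  unfold ellMap ellInv
  field_simp
  ring

theorem ellMap_mem {γ u : ℝ} (h : 0 < 1 - u ^ 2 * Real.sin γ ^ 2) (x : ℝ) :
    (u, ellMap γ u x) ∈ Eset γ ↔ x ∈ Ioo (-1 : ℝ) 1 := by
  have hs := Real.sqrt_pos.2 h
  rw [mem_E_iff]
  unfold ellMap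
  rw [show -u * Real.cos γ + x * √(1 - u ^ 2 * Real.sin γ ^ 2) + u * Real.cos γ =
    x * √(1 - u ^ 2 * Real.sin γ ^ 2) by ring, mul_pow, Real.sq_sqrt h.le, mem_Ioo, ← abs_lt,
    ← sq_lt_one_iff_abs_lt_one]
  constructor
  · intro h1; by_contra h2; push Not at h2; nlinarith
  · intro h1; nlinarith

theorem ellInv_mem {γ u v : ℝ} (h : (u, v) ∈ Eset γ) : ellInv γ u v ∈ Ioo (-1 : ℝ) 1 := by
  rw [← ellMap_mem (E_pos h), ellMap_inv (E_pos h)]; exact h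

theorem meas_ellMap (γ : ℝ) : Measurable fun p : ℝ × ℝ => ellMap γ p.1 p.2 := by
  unfold ellMap; fun_prop

theorem meas_ellInv (γ : ℝ) : Measurable fun p : ℝ × ℝ => ellInv γ p.1 p.2 := by
  unfold ellInv; fun_prop

theorem meas_E (γ : ℝ) : MeasurableSet (Eset γ) := by
  unfold Eset
  exact measurableSet_lt (by fun_prop) measurable_const

/-- one-dimensional change of variables on a chord -/
theorem lint_chord (γ u : ℝ) (g : ℝ → ℝ≥0∞) :
    ∫⁻ v in Prod.mk u ⁻¹' Eset γ, g v =
      ENNReal.ofReal (√(1 - u ^ 2 * Real.sin γ ^ 2)) * ∫⁻ x in Ioo (-1 : ℝ) 1, g (ellMap γ u x) := by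
  have hm : MeasurableSet (Prod.mk u ⁻¹' Eset γ) := measurable_prodMk_left (meas_E γ)
  by_cases h : 0 < 1 - u ^ 2 * Real.sin γ ^ 2
  · have hs := Real.sqrt_pos.2 h
    rw [← lintegral_indicator hm, lint_affine _ (-u * Real.cos γ) hs.ne', abs_of_pos hs,
      ← lintegral_indicator measurableSet_Ioo]
    congr 2
    ext x
    by_cases hx : x ∈ Ioo (-1 : ℝ) 1
    · rw [indicator_of_mem hx, indicator_of_mem]
      · rfl
      · exact (ellMap_mem h x).2 hx
    · rw [indicator_of_notMem hx, indicator_of_notMem]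
      exact fun h' => hx ((ellMap_mem h x).1 h')
  · have : Prod.mk u ⁻¹' Eset γ = ∅ := by
      ext v; simp only [mem_empty_iff_false, iff_false]; exact fun h' => h (E_pos h')
    rw [this, Real.sqrt_eq_zero_of_nonpos (not_lt.1 h)]
    simp

theorem meas_step (γ : ℝ) (q : Kernel ℝ ℝ) [IsMarkovKernel q] (H : Set (ℝ × ℝ))
    (hH : MeasurableSet H) :
    Measurable fun p : ℝ × ℝ => q (-ellInv γ p.1 p.2) {x | (p.1, ellMap γ p.1 x) ∈ H} := by
  have hm : Measurable fun p : ℝ × ℝ => -ellInv γ p.1 p.2 := (meas_ellInv γ).neg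
  have ht : MeasurableSet {z : (ℝ × ℝ) × ℝ | (z.1.1, ellMap γ z.1.1 z.2) ∈ H} := by
    have : Measurable fun z : (ℝ × ℝ) × ℝ => (z.1.1, ellMap γ z.1.1 z.2) :=
      (measurable_fst.fst).prodMk ((meas_ellMap γ).comp (measurable_fst.fst.prodMk measurable_snd))
    exact this hH
  exact Kernel.measurable_kernel_prodMk_left (κ := q.comap _ hm) ht

theorem step_inv (γ : ℝ) (q : Kernel ℝ ℝ) [IsMarkovKernel q] (hrev : Reversible1 q)
    (H : Set (ℝ × ℝ)) (hH : MeasurableSet H) :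
    ∫⁻ p in Eset γ, q (-ellInv γ p.1 p.2) {x | (p.1, ellMap γ p.1 x) ∈ H} =
      volume (H ∩ Eset γ) := by
  rw [← lintegral_indicator (meas_E γ), Measure.volume_eq_prod,
    lintegral_prod _ ((meas_step γ q H hH).indicator (meas_E γ)).aemeasurable,
    Measure.prod_apply (hH.inter (meas_E γ))]
  congr 1
  ext u
  have hm : MeasurableSet (Prod.mk u ⁻¹' Eset γ) := measurable_prodMk_left (meas_E γ)
  have hB : MeasurableSet {x | (u, ellMap γ u x) ∈ H} :=
    (measurable_const.prodMk ((meas_ellMap γ).comp measurable_prodMk_left)) hH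
  have e1 : ∫⁻ v, (Eset γ).indicator
      (fun p => q (-ellInv γ p.1 p.2) {x | (p.1, ellMap γ p.1 x) ∈ H}) (u, v) =
      ∫⁻ v in Prod.mk u ⁻¹' Eset γ, q (-ellInv γ u v) {x | (u, ellMap γ u x) ∈ H} := by
    rw [← lintegral_indicator hm]; rfl
  have hmH : MeasurableSet (Prod.mk u ⁻¹' H) := measurable_prodMk_left hH
  have e2 : volume (Prod.mk u ⁻¹' (H ∩ Eset γ)) =
      ∫⁻ v in Prod.mk u ⁻¹' Eset γ, (Prod.mk u ⁻¹' H).indicator 1 v := by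
    rw [lintegral_indicator_one hmH, Measure.restrict_apply hmH]; rfl
  rw [e1, e2, lint_chord, lint_chord]
  by_cases h : 0 < 1 - u ^ 2 * Real.sin γ ^ 2
  swap
  · rw [Real.sqrt_eq_zero_of_nonpos (not_lt.1 h)]; simp
  congr 1
  simp_rw [ellInv_map h]
  have e3 : ∫⁻ x in Ioo (-1 : ℝ) 1, q (-x) {x | (u, ellMap γ u x) ∈ H} =
      ∫⁻ x in Ioo (-1 : ℝ) 1, q x {x | (u, ellMap γ u x) ∈ H} := by
    have := (Measure.measurePreserving_neg (volume : Measure ℝ)).setLIntegral_comp_preimage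
      (measurableSet_Ioo (a := (-1 : ℝ)) (b := 1)) (q.measurable_coe hB)
    rw [← this]
    congr 2
    ext x; simp [and_comm, neg_lt]
    
  rw [e3, vol_inv q hrev _ hB, ← Measure.restrict_apply hB, ← lintegral_indicator_one hB]
  rfl


theorem m2_eq (γ : ℝ) : m2 γ = ((volume (Eset γ))⁻¹ * 2⁻¹) •
    ((volume.restrict (Eset γ)).map (fun p : ℝ × ℝ => (p.1, p.2, (1 : ℝ))) +
     (volume.restrict (Eset γ)).map (fun p : ℝ × ℝ => (p.1, p.2, (-1 : ℝ)))) := by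
  unfold m2
  rw [Measure.prod_smul_left, Measure.prod_smul_right, smul_smul, Measure.map_smul,
    Measure.prod_add, Measure.prod_dirac, Measure.prod_dirac, Measure.map_add _ _ (by fun_prop),
    Measure.map_map (by fun_prop) (by fun_prop), Measure.map_map (by fun_prop) (by fun_prop)]
  rfl

theorem m2_apply (γ : ℝ) (A : Set (ℝ × ℝ × ℝ)) (hA : MeasurableSet A) :
    m2 γ A = ((volume (Eset γ))⁻¹ * 2⁻¹) *
      (volume (Fplus A ∩ Eset γ) + volume (Fminus A ∩ Eset γ)) := by
  have h1 : Measurable (fun p : ℝ × ℝ => (p.1, p.2, (1 : ℝ))) := by fun_prop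
  have h2 : Measurable (fun p : ℝ × ℝ => (p.1, p.2, (-1 : ℝ))) := by fun_prop
  rw [m2_eq, Measure.smul_apply, Measure.add_apply, Measure.map_apply h1 hA,
    Measure.map_apply h2 hA, Measure.restrict_apply (h1 hA), Measure.restrict_apply (h2 hA)]
  rfl

theorem m2_lint (γ : ℝ) (f : ℝ × ℝ × ℝ → ℝ≥0∞) (hf : Measurable f) :
    ∫⁻ w, f w ∂(m2 γ) = ((volume (Eset γ))⁻¹ * 2⁻¹) *
      ((∫⁻ p in Eset γ, f (p.1, p.2, 1)) + ∫⁻ p in Eset γ, f (p.1, p.2, -1)) := by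
  rw [m2_eq, lintegral_smul_measure, lintegral_add_measure, lintegral_map hf (by fun_prop),
    lintegral_map hf (by fun_prop)]
  rfl

theorem vol_E_lt (γ : ℝ) (hγ : γ ∈ Ioo 0 Real.pi) : volume (Eset γ) ≠ ∞ := by
  have hs : 0 < Real.sin γ := Real.sin_pos_of_mem_Ioo hγ
  have key : ∀ u v, (u, v) ∈ Eset γ → u ∈ Icc (-(1 / Real.sin γ)) (1 / Real.sin γ) := by
    intro u v h
    have := E_pos h
    have e : |u| * Real.sin γ = |u * Real.sin γ| := by rw [abs_mul, abs_of_pos hs]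
    rw [mem_Icc, ← abs_le, le_div_iff₀ hs, e, ← sq_le_one_iff_abs_le_one]
    nlinarith
  have hsub : Eset γ ⊆ Icc (-(1 / Real.sin γ)) (1 / Real.sin γ) ×ˢ
      Icc (-(1 / Real.sin γ)) (1 / Real.sin γ) := by
    rintro ⟨u, v⟩ h
    exact ⟨key u v h, key v u ((mem_E_swap _ _ _).1 h)⟩
  refine ne_top_of_le_ne_top ?_ (measure_mono hsub)
  rw [Measure.volume_eq_prod, Measure.prod_prod]
  exact ENNReal.mul_ne_top (by simp) (by simp)

theorem vol_E_pos (γ : ℝ) : volume (Eset γ) ≠ 0 := by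
  have ho : IsOpen (Eset γ) := by
    unfold Eset
    exact isOpen_lt (by fun_prop) continuous_const
  exact (ho.measure_pos volume ⟨(0, 0), by simp [Eset]⟩).ne'

theorem m2_ae (γ : ℝ) (hγ : γ ∈ Ioo 0 Real.pi) (P : ℝ × ℝ × ℝ → Prop) (h : ∀ᵐ w ∂(m2 γ), P w) :
    (∀ᵐ p : ℝ × ℝ, p ∈ Eset γ → P (p.1, p.2, 1)) ∧
    (∀ᵐ p : ℝ × ℝ, p ∈ Eset γ → P (p.1, p.2, -1)) := by
  have hc : (volume (Eset γ))⁻¹ * 2⁻¹ ≠ 0 :=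
    mul_ne_zero (ENNReal.inv_ne_zero.2 (vol_E_lt γ hγ)) (by norm_num)
  rw [m2_eq, Measure.ae_ennreal_smul_measure_iff hc, ae_add_measure_iff] at h
  exact ⟨(ae_restrict_iff' (meas_E γ)).1 (ae_of_ae_map (by fun_prop) h.1),
    (ae_restrict_iff' (meas_E γ)).1 (ae_of_ae_map (by fun_prop) h.2)⟩

theorem m2_fin (γ : ℝ) : IsFiniteMeasure (m2 γ) := by
  constructor
  rw [m2_apply _ _ MeasurableSet.univ]
  simp only [Fplus, Fminus, mem_univ]
  by_cases h : volume (Eset γ) = ∞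
  · simp [h]
  · simp only [ofPred_true, univ_inter]
    refine ENNReal.mul_lt_top (ENNReal.mul_lt_top ?_ (by norm_num)) (by simp [lt_top_iff_ne_top, h])
    exact ENNReal.inv_lt_top.2 (pos_iff_ne_zero.2 (vol_E_pos γ))

theorem meas_Fplus {A : Set (ℝ × ℝ × ℝ)} (hA : MeasurableSet A) : MeasurableSet (Fplus A) :=
  (show Measurable (fun p : ℝ × ℝ => (p.1, p.2, (1 : ℝ))) by fun_prop) hA

theorem meas_Fminus {A : Set (ℝ × ℝ × ℝ)} (hA : MeasurableSet A) : MeasurableSet (Fminus A) :=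
  (show Measurable (fun p : ℝ × ℝ => (p.1, p.2, (-1 : ℝ))) by fun_prop) hA

/-- One step of the walk along a chord, as a probability of landing in `H`. -/
noncomputable def stepK (γ : ℝ) (q : Kernel ℝ ℝ) (H : Set (ℝ × ℝ)) (p : ℝ × ℝ) : ℝ≥0∞ :=
  q (-ellInv γ p.1 p.2) {x | (p.1, ellMap γ p.1 x) ∈ H}

theorem meas_ell1 (γ u : ℝ) : Measurable (ellMap γ u) := by
  unfold ellMap; fun_prop

theorem Q_apply (γ : ℝ) (q : Kernel ℝ ℝ) (A : Set (ℝ × ℝ × ℝ)) (hA : MeasurableSet A)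
    (w : ℝ × ℝ × ℝ) : Qfun γ q w A =
      if w.2.2 = -1 then stepK γ q (Prod.swap ⁻¹' Fplus A) (w.2.1, w.1)
      else stepK γ q (Fminus A) (w.1, w.2.1) := by
  unfold Qfun
  split_ifs with h
  · rw [Measure.map_apply ((meas_ell1 γ _).prodMk measurable_const) hA]; rfl
  · rw [Measure.map_apply (measurable_const.prodMk ((meas_ell1 γ _).prodMk measurable_const)) hA]
    rfl

theorem Q_prob (γ : ℝ) (q : Kernel ℝ ℝ) [IsMarkovKernel q] (w : ℝ × ℝ × ℝ) :
    IsProbabilityMeasure (Qfun γ q w) := by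
  constructor
  rw [Q_apply γ q _ MeasurableSet.univ]
  simp [stepK, Fplus, Fminus]

theorem Q_meas (γ : ℝ) (q : Kernel ℝ ℝ) [IsMarkovKernel q] (A : Set (ℝ × ℝ × ℝ))
    (hA : MeasurableSet A) : Measurable fun w => Qfun γ q w A := by
  simp_rw [Q_apply γ q A hA]
  refine Measurable.ite ?_ ?_ ?_
  · exact measurableSet_eq_fun measurable_snd.snd measurable_const
  · exact (meas_step γ q _ (measurable_swap (meas_Fplus hA))).comp
      (show Measurable fun w : ℝ × ℝ × ℝ => (w.2.1, w.1) by fun_prop)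
  · exact (meas_step γ q _ (meas_Fminus hA)).comp
      (show Measurable fun w : ℝ × ℝ × ℝ => (w.1, w.2.1) by fun_prop)

theorem swap_E (γ : ℝ) : Prod.swap ⁻¹' (Eset γ) = Eset γ := by
  ext ⟨u, v⟩; exact mem_E_swap γ v u

theorem mp_swap : MeasurePreserving (Prod.swap : ℝ × ℝ → ℝ × ℝ) volume volume :=
  Measure.measurePreserving_swap (μ := (volume : Measure ℝ)) (ν := (volume : Measure ℝ))

theorem Q_inv (γ : ℝ) (q : Kernel ℝ ℝ) [IsMarkovKernel q] (hrev : Reversible1 q) :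
    KInvariantMeasure (m2 γ) (Qfun γ q) := by
  intro A hA
  have hsm := measurable_swap (meas_Fplus hA)
  rw [m2_lint _ _ (Q_meas γ q A hA), m2_apply _ _ hA]
  congr 1
  rw [add_comm]
  congr 1
  · have e : ∀ p : ℝ × ℝ, Qfun γ q (p.1, p.2, -1) A =
        stepK γ q (Prod.swap ⁻¹' Fplus A) p.swap := by
      intro p; rw [Q_apply γ q A hA]; simp; rfl
    simp_rw [e]
    have h1 := mp_swap.setLIntegral_comp_preimage (meas_E γ)
      (meas_step γ q (Prod.swap ⁻¹' Fplus A) hsm)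
    rw [swap_E] at h1
    refine h1.trans ((step_inv γ q hrev _ hsm).trans ?_)
    rw [← mp_swap.measure_preimage (((meas_Fplus hA).inter (meas_E γ)).nullMeasurableSet),
      preimage_inter, swap_E]
  · have e : ∀ p : ℝ × ℝ, Qfun γ q (p.1, p.2, 1) A = stepK γ q (Fminus A) p := by
      intro p; rw [Q_apply γ q A hA]; norm_num
    simp_rw [e]
    exact step_inv γ q hrev _ (meas_Fminus hA)

theorem step_struct (γ : ℝ) (q : Kernel ℝ ℝ) (X Y : Set ℝ)
    (hX : MeasurableSet X) (hY : MeasurableSet Y) (hX0 : volume X ≠ 0)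
    (hXY : ∀ A B : Set ℝ, MeasurableSet A → MeasurableSet B →
      (∀ᵐ x : ℝ, x ∈ Ioo (-1 : ℝ) 1 → (x ∈ A → q x B = 1) ∧ (x ∉ A → q x B = 0)) →
        ((∀ᵐ x : ℝ, x ∈ X → x ∈ A) ∧ (∀ᵐ y : ℝ, y ∈ Y → y ∈ B)) ∨
        ((∀ᵐ x : ℝ, x ∈ X → x ∉ A) ∧ (∀ᵐ y : ℝ, y ∈ Y → y ∉ B)))
    (G H : Set (ℝ × ℝ)) (hG : MeasurableSet G) (hH : MeasurableSet H)
    (hGH : ∀ᵐ p : ℝ × ℝ, p ∈ Eset γ → (p ∈ G → stepK γ q H p = 1) ∧ (p ∉ G → stepK γ q H p = 0)) :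
    ∃ f : Set ℝ, ∀ᵐ p : ℝ × ℝ, p ∈ Eset γ →
      (-ellInv γ p.1 p.2 ∈ X → (p ∈ G ↔ p.1 ∈ f)) ∧ (ellInv γ p.1 p.2 ∈ Y → (p ∈ H ↔ p.1 ∈ f)) := by
  have mneg : Measurable fun p : ℝ × ℝ => (p.1, ellMap γ p.1 (-p.2)) :=
    measurable_fst.prodMk ((meas_ellMap γ).comp (measurable_fst.prodMk measurable_snd.neg))
  have hGX : MeasurableSet {p : ℝ × ℝ | p.2 ∈ X ∧ (p.1, ellMap γ p.1 (-p.2)) ∈ G} :=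
    (measurable_snd hX).inter (mneg hG)
  let f : Set ℝ := {u | 0 < volume (Prod.mk u ⁻¹' {p : ℝ × ℝ | p.2 ∈ X ∧ (p.1, ellMap γ p.1 (-p.2)) ∈ G})}
  have hf : MeasurableSet f := measurableSet_lt measurable_const (measurable_measure_prodMk_left hGX)
  refine ⟨f, ?_⟩
  rw [Measure.volume_eq_prod, Measure.ae_prod_iff_ae_ae]
  · rw [Measure.volume_eq_prod] at hGH
    filter_upwards [Measure.ae_ae_of_ae_prod hGH] with u hu
    by_cases h : 0 < 1 - u ^ 2 * Real.sin γ ^ 2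
    swap
    · exact ae_of_all _ fun v hv => absurd (E_pos hv) h
    have hs := Real.sqrt_pos.2 h
    have aeP : ∀ P : ℝ → Prop, (∀ᵐ v : ℝ, P v) ↔ ∀ᵐ x : ℝ, P (ellMap γ u x) := fun P =>
      ae_affine _ _ hs.ne' P
    have aeN : ∀ P : ℝ → Prop, (∀ᵐ v : ℝ, P v) ↔ ∀ᵐ x : ℝ, P (ellMap γ u (-x)) := fun P => by
      rw [ae_affine (-√(1 - u ^ 2 * Real.sin γ ^ 2)) (-u * Real.cos γ) (by simpa using hs.ne') P]
      unfold ellMap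
      simp only [mul_neg, neg_mul]
    have hA : MeasurableSet {x | (u, ellMap γ u (-x)) ∈ G} :=
      (mneg.comp measurable_prodMk_left) hG
    have hB : MeasurableSet {x | (u, ellMap γ u x) ∈ H} :=
      (measurable_const.prodMk (meas_ell1 γ u)) hH
    have hdis := hXY _ _ hA hB (by
      rw [aeN] at hu
      filter_upwards [hu] with x hx hxI
      have := hx ((ellMap_mem h _).2 (by simpa [and_comm, neg_lt] using hxI))
      simp only [stepK, ellInv_map h, neg_neg] at this
      exact this)
    have back : ∀ P : Prop, (∀ᵐ x : ℝ, x ∈ X → ((u, ellMap γ u (-x)) ∈ G ↔ P)) →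
        (∀ᵐ y : ℝ, y ∈ Y → ((u, ellMap γ u y) ∈ H ↔ P)) →
        (u ∈ f ↔ P) → ∀ᵐ v : ℝ, (u, v) ∈ Eset γ →
          (-ellInv γ u v ∈ X → ((u, v) ∈ G ↔ u ∈ f)) ∧
            (ellInv γ u v ∈ Y → ((u, v) ∈ H ↔ u ∈ f)) := by
      intro P h1 h2 h3
      rw [h3]
      have h1' : ∀ᵐ v : ℝ, -ellInv γ u v ∈ X → ((u, v) ∈ G ↔ P) := by
        rw [aeN]; simpa only [ellInv_map h, neg_neg] using h1
      have h2' : ∀ᵐ v : ℝ, ellInv γ u v ∈ Y → ((u, v) ∈ H ↔ P) := by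
        rw [aeP]; simpa only [ellInv_map h] using h2
      filter_upwards [h1', h2'] with v a b _ using ⟨a, b⟩
    rcases hdis with ⟨h1, h2⟩ | ⟨h1, h2⟩
    · refine back True (by simpa using h1) (by simpa using h2) (iff_true_intro ?_)
      show (0 : ℝ≥0∞) < volume
        (Prod.mk u ⁻¹' {p : ℝ × ℝ | p.2 ∈ X ∧ (p.1, ellMap γ p.1 (-p.2)) ∈ G})
      refine pos_iff_ne_zero.2 fun h0 => hX0 ?_
      refine measure_eq_zero_iff_ae_notMem.2 ?_
      filter_upwards [h1, measure_eq_zero_iff_ae_notMem.1 h0] with x a b c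
      exact b ⟨c, a c⟩
    · refine back False (by simpa using h1) (by simpa using h2) (iff_false_intro ?_)
      intro hf
      have hf' : (0 : ℝ≥0∞) < volume
        (Prod.mk u ⁻¹' {p : ℝ × ℝ | p.2 ∈ X ∧ (p.1, ellMap γ p.1 (-p.2)) ∈ G}) := hf
      refine hf'.ne' ?_
      refine measure_eq_zero_iff_ae_notMem.2 ?_
      filter_upwards [h1] with x a b
      exact a b.1 b.2
  · have h1 : Measurable fun p : ℝ × ℝ => p ∈ Eset γ := (meas_E γ).mem
    have h2 : Measurable fun p : ℝ × ℝ => -ellInv γ p.1 p.2 ∈ X :=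
      hX.mem.comp (meas_ellInv γ).neg
    have h3 : Measurable fun p : ℝ × ℝ => ellInv γ p.1 p.2 ∈ Y :=
      hY.mem.comp (meas_ellInv γ)
    have h4 : Measurable fun p : ℝ × ℝ => p.1 ∈ f := hf.mem.comp measurable_fst
    have h5 : Measurable fun p : ℝ × ℝ => p ∈ G := hG.mem
    have h6 : Measurable fun p : ℝ × ℝ => p ∈ H := hH.mem
    exact (h1.imp ((h2.imp (h5.iff h4)).and (h3.imp (h6.iff h4)))).setOf

theorem surj (γ : ℝ) (hγ : γ ∈ Ioo 0 Real.pi) (x y : ℝ) (hx : x ∈ Ioo (-1 : ℝ) 1)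
    (hy : y ∈ Ioo (-1 : ℝ) 1) :
    ∃ p ∈ Eset γ, ellInv γ p.1 p.2 = x ∧ ellInv γ p.2 p.1 = y := by
  have hs : 0 < Real.sin γ := Real.sin_pos_of_mem_Ioo hγ
  have hsc := Real.sin_sq_add_cos_sq γ
  let h : ℝ → ℝ := fun u => ellMap γ (ellMap γ u x) y - u
  have hc : Continuous h := by
    simp only [h, ellMap]; fun_prop
  let a := 1 / Real.sin γ
  have ha : 0 < a := by positivity
  have has : a * Real.sin γ = 1 := by simp only [a]; field_simp
  have has2 : a ^ 2 * Real.sin γ ^ 2 = 1 := by rw [← mul_pow, has, one_pow]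
  have e1 : ellMap γ a x = -a * Real.cos γ := by simp [ellMap, has2]
  have e2 : ellMap γ (-a) x = a * Real.cos γ := by simp [ellMap, has2]
  have e3 : √(1 - (a * Real.cos γ) ^ 2 * Real.sin γ ^ 2) = Real.sin γ := by
    rw [show 1 - (a * Real.cos γ) ^ 2 * Real.sin γ ^ 2 = Real.sin γ ^ 2 by
      rw [mul_pow, mul_right_comm, has2]; linarith]
    exact Real.sqrt_sq hs.le
  have e4 : a * Real.cos γ ^ 2 = a - Real.sin γ := by
    rw [show Real.cos γ ^ 2 = 1 - Real.sin γ * Real.sin γ by nlinarith, mul_sub, ← mul_assoc, has]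
    ring
  have h1 : h a < 0 := by
    simp only [h, e1]
    unfold ellMap
    rw [show (-a * Real.cos γ) ^ 2 = (a * Real.cos γ) ^ 2 by ring, e3]
    nlinarith [hy.2]
  have h2 : 0 < h (-a) := by
    simp only [h, e2]
    unfold ellMap
    rw [e3]
    nlinarith [hy.1]
  obtain ⟨u, ⟨hu1, hu2⟩, hu⟩ : (0 : ℝ) ∈ h '' Icc (-a) a :=
    intermediate_value_Icc' (by linarith) hc.continuousOn ⟨h1.le, h2.le⟩
  have hu1' : -a < u := lt_of_le_of_ne hu1 (fun e => by rw [← e] at hu; linarith)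
  have hu2' : u < a := lt_of_le_of_ne hu2 (fun e => by rw [e] at hu; linarith)
  have hpos : 0 < 1 - u ^ 2 * Real.sin γ ^ 2 := by
    have : u ^ 2 < a ^ 2 := by nlinarith
    have : u ^ 2 * Real.sin γ ^ 2 < a ^ 2 * Real.sin γ ^ 2 := by
      apply mul_lt_mul_of_pos_right this; positivity
    linarith
  have hE : (u, ellMap γ u x) ∈ Eset γ := (ellMap_mem hpos x).2 hx
  have hE' := (mem_E_swap _ _ _).1 hE
  refine ⟨_, hE, ellInv_map hpos x, ?_⟩
  have hu' : u = ellMap γ (ellMap γ u x) y := by simp only [h] at hu; linarith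
  show ellInv γ (ellMap γ u x) u = y
  conv_lhs => rw [hu']
  rw [← hu']
  conv_lhs => rw [hu']
  rw [← hu']
  have := ellInv_map (E_pos hE') y
  rwa [← hu'] at this

theorem C_pos (γ : ℝ) (hγ : γ ∈ Ioo 0 Real.pi) (R : Set (ℝ × ℝ)) (X Y : Set ℝ)
    (hRI : R ⊆ Ioo (-1) 1 ×ˢ Ioo (-1) 1) (h0 : volume (R ∩ X ×ˢ Y) ≠ 0) :
    volume {p : ℝ × ℝ | p ∈ Eset γ ∧ -ellInv γ p.1 p.2 ∈ X ∧ ellInv γ p.2 p.1 ∈ Y} ≠ 0 := by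
  intro hC
  apply h0
  let Ψ : ℝ × ℝ → ℝ × ℝ := fun p => (-ellInv γ p.1 p.2, ellInv γ p.2 p.1)
  have hd : DifferentiableOn ℝ Ψ
      {p : ℝ × ℝ | p ∈ Eset γ ∧ -ellInv γ p.1 p.2 ∈ X ∧ ellInv γ p.2 p.1 ∈ Y} := by
    rintro ⟨u, v⟩ hp
    apply DifferentiableAt.differentiableWithinAt
    have h1 := E_pos hp.1
    have h2 := E_pos ((mem_E_swap _ _ _).1 hp.1)
    have h1' := (Real.sqrt_pos.2 h1).ne'
    have h2' := (Real.sqrt_pos.2 h2).ne'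
    simp only [Ψ, ellInv]
    have k1 : DifferentiableAt ℝ (fun p : ℝ × ℝ => √(1 - p.1 ^ 2 * Real.sin γ ^ 2)) (u, v) :=
      DifferentiableAt.sqrt (by fun_prop) h1.ne'
    have k2 : DifferentiableAt ℝ (fun p : ℝ × ℝ => √(1 - p.2 ^ 2 * Real.sin γ ^ 2)) (u, v) :=
      DifferentiableAt.sqrt (by fun_prop) h2.ne'
    have k3 : DifferentiableAt ℝ (fun p : ℝ × ℝ => p.2 + p.1 * Real.cos γ) (u, v) := by fun_prop
    have k4 : DifferentiableAt ℝ (fun p : ℝ × ℝ => p.1 + p.2 * Real.cos γ) (u, v) := by fun_prop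
    have k5 : DifferentiableAt ℝ
        (fun p : ℝ × ℝ => (p.2 + p.1 * Real.cos γ) / √(1 - p.1 ^ 2 * Real.sin γ ^ 2)) (u, v) := by
      simp only [div_eq_mul_inv]
      exact k3.fun_mul (k1.fun_inv h1')
    have k6 : DifferentiableAt ℝ
        (fun p : ℝ × ℝ => (p.1 + p.2 * Real.cos γ) / √(1 - p.2 ^ 2 * Real.sin γ ^ 2)) (u, v) := by
      simp only [div_eq_mul_inv]
      exact k4.fun_mul (k2.fun_inv h2')
    exact k5.fun_neg.prodMk k6
  have := addHaar_image_eq_zero_of_differentiableOn_of_addHaar_eq_zero volume hd hC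
  refine measure_mono_null ?_ this
  rintro ⟨x, y⟩ ⟨hR, hx, hy⟩
  obtain ⟨hxI, hyI⟩ := hRI hR
  obtain ⟨p, hpE, hp1, hp2⟩ := surj γ hγ (-x) y (by
    simp only [mem_Ioo] at hxI ⊢; constructor <;> linarith [hxI.1, hxI.2]) hyI
  have hp1' : -ellInv γ p.1 p.2 = x := by rw [hp1, neg_neg]
  exact ⟨p, ⟨hpE, by rw [hp1']; exact hx, by rw [hp2]; exact hy⟩, by simp only [Ψ, hp1', hp2]⟩

/-- if `m¹` is reversible for `q` and `q(x,·)` is not mutually singular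
with `m¹` for `m¹`-a.e. `x`, then there is a probability measure on `E*` which is ergodic
for `Q` and absolutely continuous with respect to `m²`. -/
theorem exists_ac_ergodic_measure (γ : ℝ) (hγ : γ ∈ Ioo 0 Real.pi)
    (q : Kernel ℝ ℝ) (hq : IsMarkovOnInterval q)
    (hrev : Reversible1 q)
    (hns : ∀ᵐ x ∂m1, ¬ (q x).MutuallySingular m1) :
    ∃ μ : Measure (ℝ × ℝ × ℝ), IsProbabilityMeasure μ ∧
      KErgodicMeasure μ (Qfun γ q) ∧ μ ≪ m2 γ := by
  have hmk := hq.1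
  obtain ⟨R, hR, hR0, hRI, hRq⟩ := exists_R q hns
  obtain ⟨X, Y, hX, hY, hXY0, hXY⟩ := connect R hR hR0
  have hX0 : volume X ≠ 0 := by
    intro h
    apply hXY0
    refine measure_mono_null inter_subset_right ?_
    rw [Measure.volume_eq_prod, Measure.prod_prod, h, zero_mul]
  have hstep := step_struct γ q X Y hX hY hX0 fun A B hA hB h => hXY A B (hRq A B hA hB h)
  let C : Set (ℝ × ℝ) := {p | p ∈ Eset γ ∧ -ellInv γ p.1 p.2 ∈ X ∧ ellInv γ p.2 p.1 ∈ Y}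
  have hC : MeasurableSet C := (meas_E γ).inter (((meas_ellInv γ).neg hX).inter
    (((meas_ellInv γ).comp measurable_swap) hY))
  have hC0 : volume C ≠ 0 := C_pos γ hγ R X Y hRI hXY0
  obtain ⟨U, V, hU, hV, hUV0, hUV⟩ := connect C hC hC0
  let D0 : Set (ℝ × ℝ) := C ∩ U ×ˢ V
  have hD0 : MeasurableSet D0 := hC.inter (hU.prod hV)
  let D : Set (ℝ × ℝ × ℝ) := {w | (w.1, w.2.1) ∈ D0 ∧ w.2.2 = 1}
  have hD : MeasurableSet D := by
    refine MeasurableSet.inter ?_ (measurableSet_eq_fun measurable_snd.snd measurable_const)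
    exact (show Measurable fun w : ℝ × ℝ × ℝ => (w.1, w.2.1) by fun_prop) hD0
  have hfin := m2_fin γ
  refine erg_abs (m2 γ) (Qfun γ q) (Q_prob γ q) (Q_meas γ q) (Q_inv γ q hrev) D ?_ ?_
  · rw [m2_apply _ _ hD]
    refine mul_ne_zero (mul_ne_zero (ENNReal.inv_ne_zero.2 (vol_E_lt γ hγ)) (by norm_num)) ?_
    intro h
    rw [add_eq_zero] at h
    apply hUV0
    refine measure_mono_null ?_ h.1
    intro p hp
    exact ⟨⟨hp, rfl⟩, hp.1.1⟩
  · intro F hF hFi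
    have hFc := compl_inv (m2 γ) (Qfun γ q) (Q_meas γ q) (Q_inv γ q hrev) F hF hFi
    obtain ⟨a1, a2⟩ := m2_ae γ hγ _ hFi
    obtain ⟨b1, b2⟩ := m2_ae γ hγ _ hFc
    simp only [Q_apply γ q F hF] at a1 a2 b1 b2
    norm_num at a1 b1
    simp only [if_true] at a2 b2
    obtain ⟨f, hf⟩ := hstep (Fplus F) (Fminus F) (meas_Fplus hF) (meas_Fminus hF) (by
      filter_upwards [a1, b1] with p h1 h2 hp
      exact ⟨fun h => h1 hp h, fun h => h2 hp h⟩)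
    obtain ⟨g, hg⟩ := hstep (Prod.swap ⁻¹' Fminus F) (Prod.swap ⁻¹' Fplus F)
      (measurable_swap (meas_Fminus hF)) (measurable_swap (meas_Fplus hF)) (by
      filter_upwards [mp_swap.quasiMeasurePreserving.ae a2, mp_swap.quasiMeasurePreserving.ae b2]
        with p h1 h2 hp
      have hp' : p.swap ∈ Eset γ := (mem_E_swap _ _ _).1 hp
      exact ⟨fun h => h1 hp' h, fun h => h2 hp' h⟩)
    have hg' := mp_swap.quasiMeasurePreserving.ae hg
    have hCF : ∀ᵐ p : ℝ × ℝ, p ∈ C → ((p ∈ Fplus F ↔ p.1 ∈ f) ∧ (p ∈ Fplus F ↔ p.2 ∈ g)) := by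
      filter_upwards [hf, hg'] with p h1 h2 hp
      have hp' : p.swap ∈ Eset γ := (mem_E_swap _ _ _).1 hp.1
      exact ⟨(h1 hp.1).1 hp.2.1, (h2 hp').2 hp.2.2⟩
    have hdis := hUV f g (by
      filter_upwards [hCF] with p h hp
      exact (h hp).1.symm.trans (h hp).2)
    have lift : ∀ P : ℝ × ℝ × ℝ → Prop, MeasurableSet {w | P w} →
        (∀ᵐ p : ℝ × ℝ, p ∈ D0 → P (p.1, p.2, 1)) → ∀ᵐ w ∂(m2 γ), w ∈ D → P w := by
      intro P hP h
      have e : {w | ¬ (w ∈ D → P w)} = D \ {w | P w} := by ext w; simp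
      rw [ae_iff, e, m2_apply _ _ (hD.diff hP)]
      have z1 : volume (Fplus (D \ {w | P w}) ∩ Eset γ) = 0 := by
        refine measure_eq_zero_iff_ae_notMem.2 ?_
        filter_upwards [h] with p hp hp'
        exact hp'.1.2 (hp hp'.1.1.1)
      have z2 : Fminus (D \ {w | P w}) ∩ Eset γ = ∅ := by
        ext p
        simp only [mem_empty_iff_false, iff_false]
        intro hp
        have : (-1 : ℝ) = 1 := hp.1.1.2
        norm_num at this
      rw [z1, z2]; simp
    have fstae : ∀ P : ℝ → Prop, (∀ᵐ x : ℝ, P x) → ∀ᵐ p : ℝ × ℝ, P p.1 := fun P h =>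
      (Measure.quasiMeasurePreserving_fst (μ := (volume : Measure ℝ))
        (ν := (volume : Measure ℝ))).ae h
    rcases hdis with ⟨h1, -⟩ | ⟨h1, -⟩
    · left
      refine lift _ hF ?_
      filter_upwards [hCF, fstae _ h1] with p k1 k2 hp
      exact (k1 hp.1).1.2 (k2 hp.2.1)
    · right
      refine lift _ hF.compl ?_
      filter_upwards [hCF, fstae _ h1] with p k1 k2 hp hpF
      exact k2 hp.2.1 ((k1 hp.1).1.1 hpF)
end
end

section
/- Assume m¹ is a reversible measure for q, and suppose F ⊂ E* is (m²,Q)-invariant. Then: for Lebesgue-a.e. v ∈ (−csc γ, csc γ), (i) q(x, [F⁺]_v) = 1 for m¹-a.e. x ∈ −[F⁻]_v and (ii) q(x, −[F⁻]_v) = 1 for m¹-a.e. x ∈ [F⁺]_v; and for Lebesgue-a.e. u ∈ (−csc γ, csc γ), (iii) q(x, [F⁻]^u) = 1 for m¹-a.e. x ∈ −[F⁺]^u and (iv) q(x, −[F⁺]^u) = 1 for m¹-a.e. x ∈ [F⁻]^u. -/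
open MeasureTheory ProbabilityTheory Set Pointwise
open scoped ENNReal

noncomputable section

instance m1_finite : IsFiniteMeasure m1 := by
  constructor
  simp only [m1, Measure.smul_apply, Measure.restrict_apply_univ, Real.volume_Ioo, smul_eq_mul]
  exact ENNReal.mul_lt_top (by simp) ENNReal.ofReal_lt_top

lemma rev_sets (q : Kernel ℝ ℝ) [IsMarkovKernel q] (hrev : Reversible1 q)
    {A B : Set ℝ} (hA : MeasurableSet A) (hB : MeasurableSet B) :
    ∫⁻ x in A, q x B ∂m1 = ∫⁻ x in B, q x A ∂m1 := by
  have key : m1 ⊗ₘ q = (m1 ⊗ₘ q).map Prod.swap := by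
    haveI : IsFiniteMeasure ((m1 ⊗ₘ q).map Prod.swap) := inferInstance
    refine Measure.ext_of_integral_mul_boundedContinuousFunction fun f g => ?_
    have hint : ∀ f g : BoundedContinuousFunction ℝ ℝ,
        Integrable (fun p : ℝ × ℝ => f p.1 * g p.2) (m1 ⊗ₘ q) := by
      intro f g
      refine Integrable.of_bound (C := ‖f‖ * ‖g‖) ?_ (Filter.Eventually.of_forall fun p => ?_)
      · exact (by fun_prop : Continuous fun p : ℝ × ℝ => f p.1 * g p.2).aestronglyMeasurable
      · rw [norm_mul]
        exact mul_le_mul (f.norm_coe_le_norm _) (g.norm_coe_le_norm _) (norm_nonneg _)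
          (norm_nonneg _)
    rw [integral_map (by fun_prop)
      (by exact (by fun_prop : Continuous fun p : ℝ × ℝ => f p.1 * g p.2).aestronglyMeasurable)]
    simp only [Prod.fst_swap, Prod.snd_swap]
    rw [Measure.integral_compProd (hint f g)]
    have h2 := hint g f
    simp_rw [mul_comm (f (Prod.snd _))]
    rw [Measure.integral_compProd h2]
    simp only [integral_const_mul]
    refine hrev g f ⟨g.continuous.continuousOn, ‖g‖, fun x _ => g.norm_coe_le_norm x⟩
      ⟨f.continuous.continuousOn, ‖f‖, fun x _ => f.norm_coe_le_norm x⟩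
  rw [← Measure.compProd_apply_prod hA hB, ← Measure.compProd_apply_prod hB hA]
  conv_lhs => rw [key]
  rw [Measure.map_apply measurable_swap (hA.prod hB)]
  congr 1
  ext p
  simp [and_comm]

lemma slice_le (q : Kernel ℝ ℝ) [IsMarkovKernel q] (hrev : Reversible1 q)
    {A B : Set ℝ} (hA : MeasurableSet A) (hB : MeasurableSet B)
    (h : ∀ᵐ x ∂m1, x ∈ A → q x B = 1) :
    m1 A = ∫⁻ x in B, q x A ∂m1 ∧ m1 A ≤ m1 B := by
  have h1 : m1 A = ∫⁻ x in B, q x A ∂m1 := by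
    rw [← rev_sets q hrev hA hB, setLIntegral_congr_fun_ae hA (g := fun _ => 1) h]
    simp
  refine ⟨h1, h1.le.trans ?_⟩
  calc _ ≤ ∫⁻ x in B, 1 ∂m1 := lintegral_mono fun x => prob_le_one
    _ = m1 B := by simp

lemma slice_rev (q : Kernel ℝ ℝ) [IsMarkovKernel q] (hrev : Reversible1 q)
    {A B : Set ℝ} (hA : MeasurableSet A) (hB : MeasurableSet B)
    (h : ∀ᵐ x ∂m1, x ∈ A → q x B = 1) (hle : m1 B ≤ m1 A) :
    ∀ᵐ x ∂m1, x ∈ B → q x A = 1 := by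
  have h1 := (slice_le q hrev hA hB h).1
  rw [← ae_restrict_iff' hB]
  refine ae_eq_of_ae_le_of_lintegral_le (f := fun x => q x A) (g := fun _ => 1)
    (Filter.Eventually.of_forall fun x => prob_le_one) ?_ aemeasurable_const ?_
  · rw [← h1]; exact measure_ne_top _ _
  · rw [← h1]; simpa using hle

lemma sin_pos' {γ : ℝ} (hγ : γ ∈ Ioo 0 Real.pi) : 0 < Real.sin γ :=
  Real.sin_pos_of_pos_of_lt_pi hγ.1 hγ.2

lemma pos_of_mem {γ u : ℝ} (hγ : γ ∈ Ioo 0 Real.pi)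
    (hu : u ∈ Ioo (-(Real.sin γ)⁻¹) (Real.sin γ)⁻¹) : 0 < 1 - u ^ 2 * Real.sin γ ^ 2 := by
  have hs := sin_pos' hγ
  have h1 : |u * Real.sin γ| < 1 := by
    rw [abs_mul, abs_of_pos hs]
    have : |u| < (Real.sin γ)⁻¹ := abs_lt.2 hu
    calc _ < (Real.sin γ)⁻¹ * Real.sin γ := by gcongr
      _ = 1 := inv_mul_cancel₀ hs.ne'
  have := (sq_lt_one_iff_abs_lt_one _).2 h1
  nlinarith

lemma mem_of_E {γ : ℝ} (hγ : γ ∈ Ioo 0 Real.pi) {p : ℝ × ℝ} (hp : p ∈ Eset γ) :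
    p.1 ∈ Ioo (-(Real.sin γ)⁻¹) (Real.sin γ)⁻¹ := by
  have hs := sin_pos' hγ
  have hp' : p.1 ^ 2 + 2 * Real.cos γ * p.1 * p.2 + p.2 ^ 2 < 1 := hp
  have h1 : (p.1 * Real.sin γ) ^ 2 < 1 := by
    have := Real.sin_sq_add_cos_sq γ
    nlinarith [sq_nonneg (p.2 + Real.cos γ * p.1)]
  have h2 := (sq_lt_one_iff_abs_lt_one _).1 h1
  rw [abs_mul, abs_of_pos hs] at h2
  have : |p.1| < (Real.sin γ)⁻¹ := by
    rw [inv_eq_one_div, lt_div_iff₀ hs]; exact h2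
  exact abs_lt.1 this

lemma E_swap {γ : ℝ} {p : ℝ × ℝ} : p.swap ∈ Eset γ ↔ p ∈ Eset γ := by
  simp only [Eset, mem_setOf_eq, Prod.fst_swap, Prod.snd_swap]
  constructor <;> intro h <;> nlinarith

lemma vol_E {γ : ℝ} (hγ : γ ∈ Ioo 0 Real.pi) : volume (Eset γ) < ∞ := by
  have : Eset γ ⊆ Ioo (-(Real.sin γ)⁻¹) (Real.sin γ)⁻¹ ×ˢ Ioo (-(Real.sin γ)⁻¹) (Real.sin γ)⁻¹ :=
    fun p hp => ⟨mem_of_E hγ hp, mem_of_E (p := p.swap) hγ (E_swap.2 hp)⟩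
  refine (measure_mono this).trans_lt ?_
  rw [Measure.volume_eq_prod, Measure.prod_prod]
  exact ENNReal.mul_lt_top (by simp) (by simp)

lemma ell_mem {γ u x : ℝ} (hγ : γ ∈ Ioo 0 Real.pi)
    (hu : u ∈ Ioo (-(Real.sin γ)⁻¹) (Real.sin γ)⁻¹) (h : (u, ellMap γ u x) ∈ Eset γ) :
    x ∈ Ioo (-1 : ℝ) 1 := by
  have h0 := pos_of_mem hγ hu
  have h1 := Real.sq_sqrt h0.le
  have h' : u ^ 2 + 2 * Real.cos γ * u * ellMap γ u x + ellMap γ u x ^ 2 < 1 := h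
  unfold ellMap at h'
  have := Real.sin_sq_add_cos_sq γ
  have hx : x ^ 2 < 1 := by
    set s := Real.sqrt (1 - u ^ 2 * Real.sin γ ^ 2)
    have : x ^ 2 * s ^ 2 < s ^ 2 := by
      have e : u ^ 2 * Real.cos γ ^ 2 = u ^ 2 - u ^ 2 * Real.sin γ ^ 2 := by
        rw [← mul_one_sub, ← Real.cos_sq']
      nlinarith
    nlinarith
  exact abs_lt.1 ((sq_lt_one_iff_abs_lt_one _).1 hx)

lemma brU_eq {γ u : ℝ} (hγ : γ ∈ Ioo 0 Real.pi)
    (hu : u ∈ Ioo (-(Real.sin γ)⁻¹) (Real.sin γ)⁻¹) {G : Set (ℝ × ℝ)} (hG : G ⊆ Eset γ) :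
    brU γ G u = ellMap γ u ⁻¹' (Prod.mk u ⁻¹' G) := by
  ext x
  exact ⟨fun h => h.2, fun h => ⟨ell_mem hγ hu (hG h), h⟩⟩

lemma vol_ell {γ u : ℝ} (hγ : γ ∈ Ioo 0 Real.pi)
    (hu : u ∈ Ioo (-(Real.sin γ)⁻¹) (Real.sin γ)⁻¹) (S : Set ℝ) :
    volume (ellMap γ u ⁻¹' S) =
      ENNReal.ofReal (Real.sqrt (1 - u ^ 2 * Real.sin γ ^ 2))⁻¹ * volume S := by
  have hs := Real.sqrt_pos.2 (pos_of_mem hγ hu)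
  have e : ellMap γ u ⁻¹' S = (· * Real.sqrt (1 - u ^ 2 * Real.sin γ ^ 2)) ⁻¹'
      ((fun y => -u * Real.cos γ + y) ⁻¹' S) := rfl
  rw [e, Real.volume_preimage_mul_right hs.ne', abs_of_pos (inv_pos.2 hs), measure_preimage_add]

lemma m1_apply {A : Set ℝ} (hA : A ⊆ Ioo (-1 : ℝ) 1) : m1 A = 2⁻¹ * volume A := by
  rw [m1, Measure.smul_apply, Measure.restrict_eq_self _ hA, smul_eq_mul]

lemma ae_m1 {P : ℝ → Prop} (h : ∀ᵐ x, P x) : ∀ᵐ x ∂m1, P x :=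
  Measure.ae_smul_measure (ae_restrict_of_ae h) _

lemma ellInv_ellMap {γ u x : ℝ} (hγ : γ ∈ Ioo 0 Real.pi)
    (hu : u ∈ Ioo (-(Real.sin γ)⁻¹) (Real.sin γ)⁻¹) : ellInv γ u (ellMap γ u x) = x := by
  have hs := Real.sqrt_pos.2 (pos_of_mem hγ hu)
  unfold ellInv ellMap
  field_simp
  ring

lemma brU_sub {γ u : ℝ} {G : Set (ℝ × ℝ)} : brU γ G u ⊆ Ioo (-1 : ℝ) 1 := fun _ h => h.1

lemma brU_meas {γ u : ℝ} {G : Set (ℝ × ℝ)} (hG : MeasurableSet G) :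
    MeasurableSet (brU γ G u) := by
  refine measurableSet_Ioo.inter (hG.preimage ?_)
  unfold ellMap
  fun_prop

lemma m1_neg {A : Set ℝ} (hA : A ⊆ Ioo (-1 : ℝ) 1) : m1 (-A) = m1 A := by
  rw [m1_apply hA, m1_apply, Measure.measure_neg]
  intro x hx
  have := hA hx
  exact ⟨by linarith [this.2], by linarith [this.1]⟩

/-- One-step almost sure inclusion of `G` into `H` along the second coordinate. -/
def Step (γ : ℝ) (q : Kernel ℝ ℝ) (G H : Set (ℝ × ℝ)) : Prop :=
  ∀ᵐ p : ℝ × ℝ, p ∈ G → q (-ellInv γ p.1 p.2) {x | (p.1, ellMap γ p.1 x) ∈ H} = 1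

lemma step_one {γ : ℝ} (hγ : γ ∈ Ioo 0 Real.pi) {q : Kernel ℝ ℝ} {G H : Set (ℝ × ℝ)}
    (hHE : H ⊆ Eset γ) (h : Step γ q G H) :
    ∀ᵐ u, u ∈ Ioo (-(Real.sin γ)⁻¹) (Real.sin γ)⁻¹ →
      ∀ᵐ x ∂m1, x ∈ -brU γ G u → q x (brU γ H u) = 1 := by
  filter_upwards [Measure.ae_ae_of_ae_prod h] with u hu huI
  apply ae_m1
  have hm : ∀ᵐ x, (u, ellMap γ u x) ∈ G → q (-x) (brU γ H u) = 1 := by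
    rw [ae_iff] at hu ⊢
    have := vol_ell hγ huI {a | ¬ ((u, a) ∈ G →
      q (-ellInv γ u a) {x | (u, ellMap γ u x) ∈ H} = 1)}
    rw [hu, mul_zero] at this
    rw [← this]
    congr 1
    ext x
    simp only [mem_setOf_eq, mem_preimage, ellInv_ellMap hγ huI, brU_eq hγ huI hHE]
    rfl
  have hn := (Measure.measurePreserving_neg (volume : Measure ℝ)).quasiMeasurePreserving.ae hm
  filter_upwards [hn] with x hx hxG
  have := hx hxG.2
  rwa [neg_neg] at this

lemma step_le {γ : ℝ} (hγ : γ ∈ Ioo 0 Real.pi) {q : Kernel ℝ ℝ} [IsMarkovKernel q]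
    (hrev : Reversible1 q) {G H : Set (ℝ × ℝ)}
    (hGE : G ⊆ Eset γ) (hHE : H ⊆ Eset γ) (hG : MeasurableSet G) (hH : MeasurableSet H)
    (h : Step γ q G H) :
    ∀ᵐ u, volume (Prod.mk u ⁻¹' G) ≤ volume (Prod.mk u ⁻¹' H) := by
  filter_upwards [step_one hγ hHE h] with u hu
  by_cases huI : u ∈ Ioo (-(Real.sin γ)⁻¹) (Real.sin γ)⁻¹
  · have h1 := (slice_le q hrev (brU_meas hG).neg (brU_meas hH) (hu huI)).2
    have hs := Real.sqrt_pos.2 (pos_of_mem hγ huI)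
    rw [m1_neg brU_sub, m1_apply brU_sub, m1_apply brU_sub, brU_eq hγ huI hGE,
      brU_eq hγ huI hHE, vol_ell hγ huI, vol_ell hγ huI] at h1
    rwa [ENNReal.mul_le_mul_iff_right (by simp) (by simp),
      ENNReal.mul_le_mul_iff_right (by simpa using hs) (by simp)] at h1
  · have : Prod.mk u ⁻¹' G = ∅ := by
      ext y
      simp only [mem_preimage, mem_empty_iff_false, iff_false]
      exact fun hy => huI (mem_of_E hγ (hGE hy))
    rw [this]; simp

lemma step_vol_le {γ : ℝ} (hγ : γ ∈ Ioo 0 Real.pi) {q : Kernel ℝ ℝ} [IsMarkovKernel q]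
    (hrev : Reversible1 q) {G H : Set (ℝ × ℝ)}
    (hGE : G ⊆ Eset γ) (hHE : H ⊆ Eset γ) (hG : MeasurableSet G) (hH : MeasurableSet H)
    (h : Step γ q G H) : volume G ≤ volume H := by
  rw [Measure.volume_eq_prod, Measure.prod_apply hG, Measure.prod_apply hH]
  exact lintegral_mono_ae (step_le hγ hrev hGE hHE hG hH h)

lemma step_two {γ : ℝ} (hγ : γ ∈ Ioo 0 Real.pi) {q : Kernel ℝ ℝ} [IsMarkovKernel q]
    (hrev : Reversible1 q) {G H : Set (ℝ × ℝ)}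
    (hGE : G ⊆ Eset γ) (hHE : H ⊆ Eset γ) (hG : MeasurableSet G) (hH : MeasurableSet H)
    (h : Step γ q G H) (hle : volume H ≤ volume G) :
    ∀ᵐ u ∂(volume.restrict (Ioo (-(Real.sin γ)⁻¹) (Real.sin γ)⁻¹)),
      (∀ᵐ x ∂m1, x ∈ -brU γ G u → q x (brU γ H u) = 1) ∧
      (∀ᵐ x ∂m1, x ∈ brU γ H u → q x (-brU γ G u) = 1) := by
  rw [ae_restrict_iff' measurableSet_Ioo]
  have heq : (fun u => volume (Prod.mk u ⁻¹' G)) =ᵐ[volume] fun u => volume (Prod.mk u ⁻¹' H) := by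
    refine ae_eq_of_ae_le_of_lintegral_le (step_le hγ hrev hGE hHE hG hH h) ?_
      (measurable_measure_prodMk_left hH).aemeasurable ?_
    · rw [← Measure.prod_apply hG, ← Measure.volume_eq_prod]
      exact ((measure_mono hGE).trans_lt (vol_E hγ)).ne
    · rw [← Measure.prod_apply hG, ← Measure.prod_apply hH, ← Measure.volume_eq_prod]
      exact hle
  filter_upwards [step_one hγ hHE h, heq] with u hu he huI
  refine ⟨hu huI, slice_rev q hrev (brU_meas hG).neg (brU_meas hH) (hu huI) ?_⟩
  rw [m1_neg brU_sub, m1_apply brU_sub, m1_apply brU_sub, brU_eq hγ huI hGE,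
      brU_eq hγ huI hHE, vol_ell hγ huI, vol_ell hγ huI]
  rw [he]

lemma steps_of_inv {γ : ℝ} (hγ : γ ∈ Ioo 0 Real.pi) {q : Kernel ℝ ℝ}
    {F : Set (ℝ × ℝ × ℝ)} (hFsub : F ⊆ EstarSet γ) (hFm : MeasurableSet F)
    (hFinv : KInvariantSet (m2 γ) (Qfun γ q) F) :
    Step γ q (Fplus F) (Fminus F) ∧ Step γ q (Prod.swap ⁻¹' Fminus F) (Prod.swap ⁻¹' Fplus F) := by
  unfold KInvariantSet m2 at hFinv
  have h1 := ae_of_ae_map (by fun_prop) hFinv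
  have h2 := Measure.ae_ae_of_ae_prod h1
  rw [Measure.ae_ennreal_smul_measure_iff (ENNReal.inv_ne_zero.2 (vol_E hγ).ne)] at h2
  have hEm : MeasurableSet (Eset γ) := measurableSet_lt (by fun_prop) measurable_const
  rw [ae_restrict_iff' hEm] at h2
  have h3 : ∀ᵐ p : ℝ × ℝ, p ∈ Eset γ →
      ((p.1, p.2, (1 : ℝ)) ∈ F → Qfun γ q (p.1, p.2, 1) F = 1) ∧
      ((p.1, p.2, (-1 : ℝ)) ∈ F → Qfun γ q (p.1, p.2, -1) F = 1) := by
    filter_upwards [h2] with p hp hpE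
    have := hp hpE
    rw [Measure.ae_ennreal_smul_measure_iff (by simp), ae_add_measure_iff, ae_dirac_eq,
      ae_dirac_eq] at this
    exact this
  constructor
  · filter_upwards [h3] with p hp hpF
    have := (hp (hFsub hpF).1).1 hpF
    rw [Qfun, if_neg (by norm_num), Measure.map_apply (by unfold ellMap; fun_prop) hFm] at this
    exact this
  · have h4 := (Measure.measurePreserving_swap (μ := (volume : Measure ℝ))
      (ν := (volume : Measure ℝ))).quasiMeasurePreserving.ae h3
    unfold Step
    rw [Measure.volume_eq_prod]
    filter_upwards [h4] with p hp hpF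
    have := (hp (hFsub hpF).1).2 hpF
    rw [Qfun, if_pos rfl, Measure.map_apply (by unfold ellMap; fun_prop) hFm] at this
    exact this

lemma vol_swap {G : Set (ℝ × ℝ)} (hG : MeasurableSet G) :
    volume (Prod.swap ⁻¹' G) = volume G :=
  (Measure.measurePreserving_swap (μ := (volume : Measure ℝ))
      (ν := (volume : Measure ℝ))).measure_preimage hG.nullMeasurableSet

lemma brV_eq {γ : ℝ} {G : Set (ℝ × ℝ)} {v : ℝ} :
    brV γ G v = brU γ (Prod.swap ⁻¹' G) v := by
  ext x
  exact Iff.rfl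

/-- the slices lemma for an `(m²,Q)`-invariant set `F`. -/
theorem slices_lemma (γ : ℝ) (hγ : γ ∈ Ioo 0 Real.pi)
    (q : Kernel ℝ ℝ) (hq : IsMarkovOnInterval q)
    (hrev : Reversible1 q)
    (F : Set (ℝ × ℝ × ℝ)) (hFsub : F ⊆ EstarSet γ) (hFm : MeasurableSet F)
    (hFinv : KInvariantSet (m2 γ) (Qfun γ q) F) :
    (∀ᵐ v ∂(volume.restrict (Ioo (-(Real.sin γ)⁻¹) (Real.sin γ)⁻¹)),
      (∀ᵐ x ∂m1, x ∈ -brV γ (Fminus F) v → q x (brV γ (Fplus F) v) = 1) ∧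
      (∀ᵐ x ∂m1, x ∈ brV γ (Fplus F) v → q x (-brV γ (Fminus F) v) = 1)) ∧
    (∀ᵐ u ∂(volume.restrict (Ioo (-(Real.sin γ)⁻¹) (Real.sin γ)⁻¹)),
      (∀ᵐ x ∂m1, x ∈ -brU γ (Fplus F) u → q x (brU γ (Fminus F) u) = 1) ∧
      (∀ᵐ x ∂m1, x ∈ brU γ (Fminus F) u → q x (-brU γ (Fplus F) u) = 1)) := by
  haveI := hq.1
  obtain ⟨hU, hV⟩ := steps_of_inv hγ hFsub hFm hFinv
  have hpE : Fplus F ⊆ Eset γ := fun p hp => (hFsub hp).1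
  have hmE : Fminus F ⊆ Eset γ := fun p hp => (hFsub hp).1
  have hpm : MeasurableSet (Fplus F) := hFm.preimage (by fun_prop)
  have hmm : MeasurableSet (Fminus F) := hFm.preimage (by fun_prop)
  have hpE' : Prod.swap ⁻¹' Fplus F ⊆ Eset γ := fun p hp => E_swap.1 (hpE hp)
  have hmE' : Prod.swap ⁻¹' Fminus F ⊆ Eset γ := fun p hp => E_swap.1 (hmE hp)
  have hpm' := hpm.preimage measurable_swap
  have hmm' := hmm.preimage measurable_swap
  have l1 := step_vol_le hγ hrev hpE hmE hpm hmm hU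
  have l2 := step_vol_le hγ hrev hmE' hpE' hmm' hpm' hV
  simp only [brV_eq]
  refine ⟨step_two hγ hrev hmE' hpE' hmm' hpm' hV ?_, step_two hγ hrev hpE hmE hpm hmm hU ?_⟩
  · rwa [vol_swap hpm, vol_swap hmm]
  · rwa [vol_swap hpm, vol_swap hmm] at l2
end
end
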